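/- (Bobkov–Götze dual characterization) Let c be a lower semicontinuous cost function on a Polish space 𝒳, α ∈ 𝒜, and μ ∈ P(𝒳). The following are equivalent: (1) α(𝒯_c(ν,μ)) ≤ H(ν|μ) for all ν ∈ P(𝒳); (2) for all bounded continuous functions u, v on 𝒳 satisfying u(x) + v(y) ≤ c(x,y) for all x,y ∈ 𝒳, and all s ≥ 0, ∫ e^{s u} dμ ≤ exp( −s ∫ v dμ + α⊛(s) ). -/

import Mathlib

open MeasureTheory ENNReal

/-- The optimal transport cost `𝒯_c(ν, μ)` associated with the cost function `c`:
the infimum of `∫ c dπ` over all couplings `π` of `ν` and `μ`. -/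
noncomputable def optCost {X : Type*} [MeasurableSpace X] (c : X → X → ℝ)
    (ν μ : Measure X) : ℝ≥0∞ :=
  ⨅ (π : Measure (X × X)) (_ : π.map Prod.fst = ν ∧ π.map Prod.snd = μ),
    ∫⁻ p, ENNReal.ofReal (c p.1 p.2) ∂π

open Classical in
/-- The relative entropy `H(ν|μ)`: it equals `∫ h(dν/dμ) dμ` with
`h(t) = t log t - t + 1 ≥ 0` if `ν ≪ μ`, and `+∞` otherwise.  For probability
measures `ν ≪ μ` this coincides with `∫ log (dν/dμ) dν`. -/
noncomputable def relEntropy {X : Type*} [MeasurableSpace X] (ν μ : Measure X) : ℝ≥0∞ :=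
  if ν ≪ μ then
    ∫⁻ x, ENNReal.ofReal ((ν.rnDeriv μ x).toReal * Real.log (ν.rnDeriv μ x).toReal
      - (ν.rnDeriv μ x).toReal + 1) ∂μ
  else ∞

/-- The natural extension to `ℝ≥0∞` of a function `α : [0,∞) → [0,∞)`.
For an increasing `α` and `x < ∞` it equals `ENNReal.ofReal (α x.toReal)`,
and at `x = ∞` it is the limit of `α` at `+∞` (so `∞` when `α` is unbounded). -/
noncomputable def extRealFun (α : ℝ → ℝ) (x : ℝ≥0∞) : ℝ≥0∞ :=
  ⨆ (t : ℝ) (_ : 0 ≤ t ∧ ENNReal.ofReal t ≤ x), ENNReal.ofReal (α t)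

/-!
Both implications combine two convex dualities. The Gibbs variational principle gives
`∫ f dν ≤ H(ν|μ) + log ∫ e^f dμ`, with equality when `ν ∝ e^f μ`, and Kantorovich duality says that
`𝒯_c(ν, μ)` is the supremum of `∫ u dν + ∫ v dμ` over `u(x) + v(y) ≤ c(x, y)`. The
transport–entropy inequality at `ν ∝ e^{su} μ` yields the exponential bound; conversely the
exponential bounds at a slope `s` of `α` yield the tangent line of `α` at `t`, hence `α(t)`.

For Kantorovich duality, embed the space in the Hilbert cube and write the cost as an increasing
limit of continuous costs there. M. Riesz extension on the compact product turns the bound on the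
dual problem into one positive functional, i.e. one coupling, which is good for all of these costs
at once; monotone convergence then passes to the limit.
-/

open Set TopologicalSpace InformationTheory
open scoped NNReal BoundedContinuousFunction

section GibbsVariationalPrinciple

variable {X : Type*} [MeasurableSpace X] {μ ν : Measure X}

lemma relEntropy_eq_klDiv [IsFiniteMeasure ν] [IsFiniteMeasure μ] :
    relEntropy ν μ = klDiv ν μ := by
  rw [klDiv_eq_lintegral_klFun, relEntropy]
  simp only [klFun_apply, sub_add_eq_add_sub]

variable [IsProbabilityMeasure μ] {f : X → ℝ}

lemma integral_le_toReal_klDiv_add_log_integral_exp [IsProbabilityMeasure ν]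
    (hfin : klDiv ν μ ≠ ∞) (hf : Integrable f ν) (hexp : Integrable (fun x ↦ Real.exp (f x)) μ) :
    ∫ x, f x ∂ν ≤ (klDiv ν μ).toReal + Real.log (∫ x, Real.exp (f x) ∂μ) := by
  obtain ⟨hac, hllr⟩ := klDiv_ne_top_iff.1 hfin
  have : IsProbabilityMeasure (μ.tilted f) := isProbabilityMeasure_tilted hexp
  have gibbs := integral_llr_add_sub_measure_univ_nonneg
    (hac.trans (absolutelyContinuous_tilted hexp)) (integrable_llr_tilted_right hac hf hllr hexp)
  rw [integral_llr_tilted_right hac hf hexp hllr, probReal_univ, probReal_univ] at gibbs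
  rw [toReal_klDiv_of_measure_eq hac (by simp)]
  linarith

lemma llr_tilted_self_ae_eq (hexp : Integrable (fun x ↦ Real.exp (f x)) μ) :
    llr (μ.tilted f) μ =ᵐ[μ.tilted f] fun x ↦ f x - Real.log (∫ x, Real.exp (f x) ∂μ) :=
  (tilted_absolutelyContinuous μ f).ae_le (log_rnDeriv_tilted_left_self hexp)

lemma klDiv_tilted_self_ne_top (hexp : Integrable (fun x ↦ Real.exp (f x)) μ)
    (hf : Integrable f (μ.tilted f)) : klDiv (μ.tilted f) μ ≠ ∞ :=
  klDiv_ne_top (tilted_absolutelyContinuous μ f)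
    ((hf.sub (integrable_const _)).congr (llr_tilted_self_ae_eq hexp).symm)

lemma toReal_klDiv_tilted_self (hexp : Integrable (fun x ↦ Real.exp (f x)) μ)
    (hf : Integrable f (μ.tilted f)) :
    (klDiv (μ.tilted f) μ).toReal =
      ∫ x, f x ∂(μ.tilted f) - Real.log (∫ x, Real.exp (f x) ∂μ) := by
  have : IsProbabilityMeasure (μ.tilted f) := isProbabilityMeasure_tilted hexp
  rw [toReal_klDiv_of_measure_eq (tilted_absolutelyContinuous μ f) (by simp),
    integral_congr_ae (llr_tilted_self_ae_eq hexp), integral_sub hf (integrable_const _),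
    integral_const, probReal_univ, one_smul]

end GibbsVariationalPrinciple

lemma exists_subgradient_of_mem_interior {S : Set ℝ} {f : ℝ → ℝ} (hf : ConvexOn ℝ S f) {x : ℝ}
    (hx : x ∈ interior S) : ∃ s, ∀ y ∈ S, f x + s * (y - x) ≤ f y := by
  refine ⟨derivWithin f (Ioi x) x, fun y hy ↦ ?_⟩
  rcases lt_trichotomy y x with hyx | rfl | hxy
  · have hslope := (hf.slope_le_leftDeriv_of_mem_interior hy hx hyx).trans
      (hf.leftDeriv_le_rightDeriv_of_mem_interior hx)
    rw [slope_def_field, div_le_iff₀ (sub_pos.2 hyx)] at hslope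
    linarith
  · simp
  · have hslope := hf.rightDeriv_le_slope_of_mem_interior hx hy hxy
    rw [slope_def_field, le_div_iff₀ (sub_pos.2 hxy)] at hslope
    linarith

section PaschHausdorffEnvelope

variable {Z W : Type*} [PseudoMetricSpace W]

/-- The Pasch–Hausdorff envelope of `c : Z → ℝ` transported along `e : Z → W`: for `c` bounded
below it is the largest `K`-Lipschitz function `g` on `W` with `g ∘ e ≤ c`. It serves to
approximate a lower semicontinuous cost from below by continuous ones. -/
noncomputable def paschHausdorffEnvelope (e : Z → W) (c : Z → ℝ) (K : ℝ≥0) (w : W) : ℝ :=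
  ⨅ z, (c z + K * dist w (e z))

variable {e : Z → W} {c : Z → ℝ} (hc : ∀ z, 0 ≤ c z)

include hc

lemma bddBelow_paschHausdorffEnvelope (K : ℝ≥0) (w : W) :
    BddBelow (range fun z ↦ c z + K * dist w (e z)) :=
  ⟨0, forall_mem_range.2 fun z ↦ add_nonneg (hc z) (by positivity)⟩

lemma paschHausdorffEnvelope_nonneg (K : ℝ≥0) (w : W) : 0 ≤ paschHausdorffEnvelope e c K w :=
  Real.iInf_nonneg fun z ↦ add_nonneg (hc z) (by positivity)

lemma paschHausdorffEnvelope_apply_le (K : ℝ≥0) (z : Z) :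
    paschHausdorffEnvelope e c K (e z) ≤ c z :=
  (ciInf_le (bddBelow_paschHausdorffEnvelope hc K (e z)) z).trans_eq (by simp)

lemma monotone_paschHausdorffEnvelope : Monotone (paschHausdorffEnvelope e c) := fun K L hKL w ↦
  ciInf_mono (bddBelow_paschHausdorffEnvelope hc K w) fun z ↦ by gcongr

variable [Nonempty Z]

lemma lipschitzWith_paschHausdorffEnvelope (K : ℝ≥0) :
    LipschitzWith K (paschHausdorffEnvelope e c K) := by
  refine LipschitzWith.of_le_add_mul _ fun x y ↦ sub_le_iff_le_add.1 (le_ciInf fun z ↦ ?_)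
  rw [sub_le_iff_le_add]
  calc paschHausdorffEnvelope e c K x
      ≤ c z + K * dist x (e z) := ciInf_le (bddBelow_paschHausdorffEnvelope hc K x) z
    _ ≤ c z + K * (dist x y + dist y (e z)) := by gcongr; exact dist_triangle x y (e z)
    _ = c z + K * dist y (e z) + K * dist x y := by ring

lemma exists_nat_le_paschHausdorffEnvelope [TopologicalSpace Z] (he : Topology.IsInducing e)
    {z : Z} (hlsc : LowerSemicontinuousAt c z) {a : ℝ} (ha : a < c z) :
    ∃ n : ℕ, a ≤ paschHausdorffEnvelope e c n (e z) := by
  obtain ⟨δ, hδ, hnear⟩ : ∃ δ > 0, ∀ z', dist (e z') (e z) < δ → a < c z' := by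
    have hev := hlsc a ha
    rw [he.nhds_eq_comap, Filter.eventually_comap, Metric.eventually_nhds_iff] at hev
    exact hev.imp fun δ h ↦ ⟨h.1, fun z' hz' ↦ h.2 hz' z' rfl⟩
  obtain ⟨n, hn⟩ := exists_nat_ge (a / δ)
  refine ⟨n, le_ciInf fun z' ↦ ?_⟩
  rcases lt_or_ge (dist (e z') (e z)) δ with hlt | hge
  · exact (hnear z' hlt).le.trans (le_add_of_nonneg_right (by positivity))
  · calc a ≤ n * δ := (div_le_iff₀ hδ).1 hn
      _ ≤ n * dist (e z) (e z') := by rw [dist_comm]; gcongr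
      _ ≤ c z' + (n : ℝ≥0) * dist (e z) (e z') := by simpa using hc z'

lemma ofReal_le_iSup_ofReal_paschHausdorffEnvelope [TopologicalSpace Z]
    (he : Topology.IsInducing e) {z : Z} (hlsc : LowerSemicontinuousAt c z) :
    ENNReal.ofReal (c z) ≤ ⨆ n : ℕ, ENNReal.ofReal (paschHausdorffEnvelope e c n (e z)) := by
  refine le_of_forall_lt_imp_le_of_dense fun b hb ↦ ?_
  have hb_top : b ≠ ∞ := (hb.trans ofReal_lt_top).ne
  obtain ⟨n, hn⟩ := exists_nat_le_paschHausdorffEnvelope hc he hlsc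
    ((ENNReal.lt_ofReal_iff_toReal_lt hb_top).1 hb)
  exact le_iSup_of_le n ((ENNReal.le_ofReal_iff_toReal_le hb_top
    (paschHausdorffEnvelope_nonneg hc _ _)).2 hn)

end PaschHausdorffEnvelope

section Couplings

variable {X Y : Type*} [MeasurableSpace X] [MeasurableSpace Y]
  {π : Measure (X × Y)} {ν : Measure X} {μ : Measure Y}

/-- `π` is a coupling (transport plan) of `ν` and `μ`. -/
structure IsCoupling (π : Measure (X × Y)) (ν : Measure X) (μ : Measure Y) : Prop where
  map_fst : π.map Prod.fst = ν
  map_snd : π.map Prod.snd = μ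

lemma isCoupling_prod (ν : Measure X) (μ : Measure Y) [IsProbabilityMeasure ν]
    [IsProbabilityMeasure μ] : IsCoupling (ν.prod μ) ν μ :=
  ⟨by simp, by simp⟩

namespace IsCoupling

lemma isFiniteMeasure [IsFiniteMeasure ν] (h : IsCoupling π ν μ) : IsFiniteMeasure π := by
  have : IsFiniteMeasure (π.map Prod.fst) := by rwa [h.map_fst]
  exact Measure.isFiniteMeasure_of_map measurable_fst.aemeasurable

lemma integrable_fst {u : X → ℝ} (h : IsCoupling π ν μ) (hu : Integrable u ν) :
    Integrable (fun p ↦ u p.1) π :=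
  Integrable.comp_measurable (by rwa [h.map_fst]) measurable_fst

lemma integrable_snd {v : Y → ℝ} (h : IsCoupling π ν μ) (hv : Integrable v μ) :
    Integrable (fun p ↦ v p.2) π :=
  Integrable.comp_measurable (by rwa [h.map_snd]) measurable_snd

lemma integral_fst_add_snd {u : X → ℝ} {v : Y → ℝ} (h : IsCoupling π ν μ) (hu : Integrable u ν)
    (hv : Integrable v μ) : ∫ p, (u p.1 + v p.2) ∂π = ∫ x, u x ∂ν + ∫ y, v y ∂μ := by
  rw [integral_add (h.integrable_fst hu) (h.integrable_snd hv)]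
  congr 1
  · rw [← h.map_fst, integral_map measurable_fst.aemeasurable (by rw [h.map_fst]; exact hu.1)]
  · rw [← h.map_snd, integral_map measurable_snd.aemeasurable (by rw [h.map_snd]; exact hv.1)]

lemma exists_of_map_measurableEmbedding {X' Y' : Type*} [MeasurableSpace X'] [MeasurableSpace Y']
    {F : X → X'} {G : Y → Y'} (hF : MeasurableEmbedding F) (hG : MeasurableEmbedding G)
    {ρ : Measure (X' × Y')} (h : IsCoupling ρ (ν.map F) (μ.map G)) :
    ∃ π, IsCoupling π ν μ ∧ π.map (Prod.map F G) = ρ := by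
  have hFG : MeasurableEmbedding (Prod.map F G) := hF.prodMap hG
  have hF_range : ∀ᵐ p ∂ρ, p.1 ∈ range F := ae_of_ae_map measurable_fst.aemeasurable <| by
    rw [h.map_fst, hF.ae_map_iff]; exact .of_forall mem_range_self
  have hG_range : ∀ᵐ p ∂ρ, p.2 ∈ range G := ae_of_ae_map measurable_snd.aemeasurable <| by
    rw [h.map_snd, hG.ae_map_iff]; exact .of_forall mem_range_self
  have hmap : (ρ.comap (Prod.map F G)).map (Prod.map F G) = ρ := by
    rw [hFG.map_comap, Measure.restrict_eq_self_of_ae_mem]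
    filter_upwards [hF_range, hG_range] with p hp₁ hp₂
    rw [range_prodMap]
    exact ⟨hp₁, hp₂⟩
  refine ⟨ρ.comap (Prod.map F G), ⟨hF.map_injective ?_, hG.map_injective ?_⟩, hmap⟩
  · rw [← h.map_fst, Measure.map_map hF.measurable measurable_fst]
    nth_rw 2 [← hmap]
    rw [Measure.map_map measurable_fst hFG.measurable]
    rfl
  · rw [← h.map_snd, Measure.map_map hG.measurable measurable_snd]
    nth_rw 2 [← hmap]
    rw [Measure.map_map measurable_snd hFG.measurable]
    rfl

end IsCoupling

lemma ofReal_integral_le_lintegral_ofReal {f : X → ℝ} (hf : Integrable f ν) :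
    ENNReal.ofReal (∫ x, f x ∂ν) ≤ ∫⁻ x, ENNReal.ofReal (f x) ∂ν := by
  refine ENNReal.ofReal_le_of_le_toReal ?_
  rw [integral_eq_lintegral_pos_part_sub_lintegral_neg_part hf]
  exact sub_le_self _ toReal_nonneg

lemma ofReal_integral_add_integral_le_optCost {c : X → X → ℝ} {ν μ : Measure X} {u v : X → ℝ}
    (hu : Integrable u ν) (hv : Integrable v μ) (huv : ∀ x y, u x + v y ≤ c x y) :
    ENNReal.ofReal (∫ x, u x ∂ν + ∫ y, v y ∂μ) ≤ optCost c ν μ := by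
  refine le_iInf₂ fun π hπ ↦ ?_
  have hπ : IsCoupling π ν μ := ⟨hπ.1, hπ.2⟩
  calc ENNReal.ofReal (∫ x, u x ∂ν + ∫ y, v y ∂μ)
      = ENNReal.ofReal (∫ p, (u p.1 + v p.2) ∂π) := by rw [hπ.integral_fst_add_snd hu hv]
    _ ≤ ∫⁻ p, ENNReal.ofReal (u p.1 + v p.2) ∂π :=
        ofReal_integral_le_lintegral_ofReal ((hπ.integrable_fst hu).add (hπ.integrable_snd hv))
    _ ≤ ∫⁻ p, ENNReal.ofReal (c p.1 p.2) ∂π :=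
        lintegral_mono fun p ↦ ENNReal.ofReal_le_ofReal (huv p.1 p.2)

end Couplings

section CompactDuality

section DominatingCone

lemma directed_const_sub {E ι : Type*} [AddCommGroup E] [PartialOrder E] [IsOrderedAddMonoid E]
    {f : ι → E} (hf : Directed (· ≤ ·) f) (k : E) : Directed (· ≥ ·) fun i ↦ k - f i :=
  hf.mono_comp _ fun _ _ h ↦ sub_le_sub_left h k

variable {E ι : Type*} [AddCommGroup E] [PartialOrder E] [IsOrderedAddMonoid E] [Module ℝ E]
  [PosSMulMono ℝ E] [Nonempty ι]

/-- The convex cone of the elements dominating a nonnegative multiple of some member of the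
downward directed family `h`. -/
def dominatingCone (h : ι → E) (hdir : Directed (· ≥ ·) h) : PointedCone ℝ E where
  carrier := {k | ∃ a : ℝ, 0 ≤ a ∧ ∃ i, a • h i ≤ k}
  zero_mem' := ⟨0, le_rfl, Classical.arbitrary ι, by simp⟩
  add_mem' := by
    rintro k l ⟨a, ha, i, hk⟩ ⟨b, hb, j, hl⟩
    obtain ⟨m, him, hjm⟩ := hdir i j
    refine ⟨a + b, add_nonneg ha hb, m, ?_⟩
    rw [add_smul]
    exact add_le_add ((smul_le_smul_of_nonneg_left him ha).trans hk)
      ((smul_le_smul_of_nonneg_left hjm hb).trans hl)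
  smul_mem' := by
    rintro ⟨r, hr⟩ k ⟨a, ha, i, hk⟩
    refine ⟨r * a, mul_nonneg hr ha, i, ?_⟩
    rw [mul_smul]
    exact smul_le_smul_of_nonneg_left hk hr

variable {h : ι → E} {hdir : Directed (· ≥ ·) h} {k : E}

lemma mem_dominatingCone : k ∈ dominatingCone h hdir ↔ ∃ a : ℝ, 0 ≤ a ∧ ∃ i, a • h i ≤ k :=
  Iff.rfl

lemma mem_dominatingCone_of_nonneg (hk : 0 ≤ k) : k ∈ dominatingCone h hdir :=
  ⟨0, le_rfl, Classical.arbitrary ι, by simpa using hk⟩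

lemma mem_dominatingCone_self (i : ι) : h i ∈ dominatingCone h hdir :=
  ⟨1, zero_le_one, i, by simp⟩

end DominatingCone

variable {K L : Type*} [TopologicalSpace K] [TopologicalSpace L]

/-- The linear map sending a pair of potentials `(u, v)` to the function `(x, y) ↦ u x + v y` on the
product, often written `u ⊕ v`. -/
def potentialSum : (C(K, ℝ) × C(L, ℝ)) →ₗ[ℝ] C(K × L, ℝ) :=
  (ContinuousMap.compRightAlgHom ℝ ℝ .fst).toLinearMap.coprod
    (ContinuousMap.compRightAlgHom ℝ ℝ .snd).toLinearMap

lemma potentialSum_apply (u : C(K, ℝ)) (v : C(L, ℝ)) (p : K × L) :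
    potentialSum (u, v) p = u p.1 + v p.2 :=
  rfl

lemma potentialSum_const_zero (T : ℝ) :
    potentialSum (ContinuousMap.const K T, (0 : C(L, ℝ))) = ContinuousMap.const (K × L) T := by
  ext p
  simp [potentialSum_apply]

variable [CompactSpace K] [CompactSpace L]

lemma integrable_continuousMap [MeasurableSpace K] [OpensMeasurableSpace K] (m : Measure K)
    [IsFiniteMeasure m] (k : C(K, ℝ)) : Integrable k m :=
  (BoundedContinuousFunction.mkOfCompact k).integrable m

lemma exists_measure_forall_integral_eq_of_nonneg [T2Space K] [MeasurableSpace K] [BorelSpace K]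
    {g : C(K, ℝ) →ₗ[ℝ] ℝ} (hg : ∀ k, 0 ≤ k → 0 ≤ g k) :
    ∃ m : Measure K, IsFiniteMeasure m ∧ ∀ k : C(K, ℝ), ∫ x, k x ∂m = g k := by
  let Λ : CompactlySupportedContinuousMap K ℝ →ₚ[ℝ] ℝ := PositiveLinearMap.mk₀
    { toFun := fun k ↦ g k.toContinuousMap
      map_add' := fun k l ↦ map_add g k.toContinuousMap l.toContinuousMap
      map_smul' := fun r k ↦ map_smul g r k.toContinuousMap } fun k hk ↦ hg k.toContinuousMap hk
  exact ⟨RealRMK.rieszMeasure Λ, inferInstance, fun k ↦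
    RealRMK.integral_rieszMeasure Λ (CompactlySupportedContinuousMap.continuousMapEquiv k)⟩

variable [MeasurableSpace K] [BorelSpace K] [MeasurableSpace L] [BorelSpace L]
  {ν : Measure K} {μ : Measure L} {ι : Type*} [Nonempty ι] {f : ι → C(K × L, ℝ)} {T : ℝ}

lemma integral_add_integral_nonneg_of_mem_dominatingCone [IsProbabilityMeasure ν]
    [IsProbabilityMeasure μ] (hf : Directed (· ≤ ·) f)
    (hT : ∀ i u v, potentialSum (u, v) ≤ f i → ∫ x, u x ∂ν + ∫ y, v y ∂μ ≤ T)
    {u : C(K, ℝ)} {v : C(L, ℝ)} (huv : potentialSum (u, v) ∈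
      dominatingCone (fun i ↦ .const _ T - f i) (directed_const_sub hf _)) :
    0 ≤ ∫ x, u x ∂ν + ∫ y, v y ∂μ := by
  obtain ⟨a, ha, i, hle⟩ := mem_dominatingCone.1 huv
  rcases ha.eq_or_lt with rfl | ha
  · rw [← (isCoupling_prod ν μ).integral_fst_add_snd (integrable_continuousMap ν u)
      (integrable_continuousMap μ v)]
    rw [zero_smul] at hle
    exact integral_nonneg hle
  · have hadm : potentialSum (.const K T - a⁻¹ • u, -(a⁻¹ • v)) ≤ f i := by
      have hsplit : potentialSum (.const K T - a⁻¹ • u, -(a⁻¹ • v)) =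
          .const (K × L) T - a⁻¹ • potentialSum (u, v) := by
        rw [← potentialSum_const_zero, ← map_smul, ← map_sub]; simp
      rw [hsplit, sub_le_comm]
      exact (le_inv_smul_iff_of_pos ha).2 hle
    have hint := hT i _ _ hadm
    simp only [ContinuousMap.sub_apply, ContinuousMap.const_apply, ContinuousMap.neg_apply,
      ContinuousMap.smul_apply, smul_eq_mul] at hint
    rw [integral_sub (integrable_const T) ((integrable_continuousMap ν u).const_mul _),
      integral_neg, integral_const_mul, integral_const_mul, integral_const, probReal_univ,
      one_smul] at hint
    refine nonneg_of_mul_nonneg_right (?_ : 0 ≤ a⁻¹ * _) (inv_pos.2 ha)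
    linarith

lemma exists_linearMap_extending_integral_add_integral [SecondCountableTopology L]
    [IsProbabilityMeasure ν] [IsProbabilityMeasure μ] (hf : Directed (· ≤ ·) f)
    (hT : ∀ i u v, potentialSum (u, v) ≤ f i → ∫ x, u x ∂ν + ∫ y, v y ∂μ ≤ T) :
    ∃ g : C(K × L, ℝ) →ₗ[ℝ] ℝ,
      (∀ u v, g (potentialSum (u, v)) = ∫ x, u x ∂ν + ∫ y, v y ∂μ) ∧
      ∀ k ∈ dominatingCone (fun i ↦ .const _ T - f i) (directed_const_sub hf _), 0 ≤ g k := by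
  -- The product measure shows that `u ⊕ v ↦ ∫ u dν + ∫ v dμ` is well defined.
  let I : C(K × L, ℝ) →ₗ[ℝ] ℝ :=
    { toFun := fun k ↦ ∫ p, k p ∂(ν.prod μ)
      map_add' := fun k l ↦
        integral_add (integrable_continuousMap _ k) (integrable_continuousMap _ l)
      map_smul' := fun r k ↦ integral_smul r k }
  have hI (u : C(K, ℝ)) (v : C(L, ℝ)) :
      I (potentialSum (u, v)) = ∫ x, u x ∂ν + ∫ y, v y ∂μ :=
    (isCoupling_prod ν μ).integral_fst_add_snd (integrable_continuousMap ν u)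
      (integrable_continuousMap μ v)
  obtain ⟨g, hgI, hg⟩ := riesz_extension
    (dominatingCone (fun i ↦ .const _ T - f i) (directed_const_sub hf _))
    ⟨LinearMap.range potentialSum, I.domRestrict _⟩
    (by
      rintro ⟨_, ⟨u, v⟩, rfl⟩ huv
      exact (integral_add_integral_nonneg_of_mem_dominatingCone hf hT huv).trans_eq (hI u v).symm)
    (fun k ↦ ⟨⟨_, (.const K ‖k‖, 0), potentialSum_const_zero ‖k‖⟩,
      mem_dominatingCone_of_nonneg fun p ↦
        neg_le_iff_add_nonneg'.1 (neg_le_of_abs_le (k.norm_coe_le_norm p))⟩)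
  exact ⟨g, fun u v ↦ (hgI ⟨_, (u, v), rfl⟩).trans (hI u v), hg⟩

variable [MetrizableSpace K] [MetrizableSpace L]

lemma exists_isCoupling_of_nonneg [IsFiniteMeasure ν] [IsFiniteMeasure μ]
    {g : C(K × L, ℝ) →ₗ[ℝ] ℝ} (hg : ∀ k, 0 ≤ k → 0 ≤ g k)
    (hg_sum : ∀ u v, g (potentialSum (u, v)) = ∫ x, u x ∂ν + ∫ y, v y ∂μ) :
    ∃ π, IsCoupling π ν μ ∧ ∀ k : C(K × L, ℝ), ∫ p, k p ∂π = g k := by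
  obtain ⟨π, _, hπ⟩ := exists_measure_forall_integral_eq_of_nonneg hg
  refine ⟨π, ⟨ext_of_forall_integral_eq_of_IsFiniteMeasure fun u ↦ ?_,
    ext_of_forall_integral_eq_of_IsFiniteMeasure fun v ↦ ?_⟩, hπ⟩
  · calc ∫ x, u x ∂(π.map Prod.fst)
        = ∫ p, potentialSum (u.toContinuousMap, (0 : C(L, ℝ))) p ∂π := by
          rw [integral_map (by fun_prop) (by fun_prop)]
          simp [potentialSum_apply]
      _ = ∫ x, u x ∂ν := by simp [hπ, hg_sum]
  · calc ∫ y, v y ∂(π.map Prod.snd)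
        = ∫ p, potentialSum ((0 : C(K, ℝ)), v.toContinuousMap) p ∂π := by
          rw [integral_map (by fun_prop) (by fun_prop)]
          simp [potentialSum_apply]
      _ = ∫ y, v y ∂μ := by simp [hπ, hg_sum]

theorem exists_isCoupling_forall_integral_le_of_directed [IsProbabilityMeasure ν]
    [IsProbabilityMeasure μ] (hf : Directed (· ≤ ·) f)
    (hT : ∀ i u v, potentialSum (u, v) ≤ f i → ∫ x, u x ∂ν + ∫ y, v y ∂μ ≤ T) :
    ∃ π, IsCoupling π ν μ ∧ ∀ i, ∫ p, f i p ∂π ≤ T := by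
  obtain ⟨g, hg_sum, hg_cone⟩ := exists_linearMap_extending_integral_add_integral hf hT
  obtain ⟨π, hπ, hπg⟩ := exists_isCoupling_of_nonneg
    (fun k hk ↦ hg_cone k (mem_dominatingCone_of_nonneg hk)) hg_sum
  refine ⟨π, hπ, fun i ↦ ?_⟩
  have hgT : g (.const _ T) = T := by rw [← potentialSum_const_zero, hg_sum]; simp
  have hgf := hg_cone _ (mem_dominatingCone_self i)
  rw [map_sub, sub_nonneg] at hgf
  rw [hπg]
  linarith

end CompactDuality

section KantorovichDuality

variable {X Y : Type*} [TopologicalSpace X] [MeasurableSpace X] [TopologicalSpace Y]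
  [MeasurableSpace Y] {ν : Measure X} {μ : Measure Y} [IsProbabilityMeasure ν]
  [IsProbabilityMeasure μ] {T : ℝ}

section Embedding

variable {K L : Type*} [TopologicalSpace K] [CompactSpace K] [MetrizableSpace K]
  [MeasurableSpace K] [BorelSpace K] [TopologicalSpace L] [CompactSpace L] [MetrizableSpace L]
  [MeasurableSpace L] [BorelSpace L] {F : X → K} {G : Y → L}

lemma exists_isCoupling_forall_integral_comp_le (hF : Continuous F) (hFm : MeasurableEmbedding F)
    (hG : Continuous G) (hGm : MeasurableEmbedding G) {ι : Type*} [Nonempty ι]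
    {f : ι → C(K × L, ℝ)} (hf : Directed (· ≤ ·) f)
    (hT : ∀ i, ∀ (u : X →ᵇ ℝ) (v : Y →ᵇ ℝ), (∀ x y, u x + v y ≤ f i (F x, G y)) →
      ∫ x, u x ∂ν + ∫ y, v y ∂μ ≤ T) :
    ∃ π, IsCoupling π ν μ ∧ ∀ i, ∫ p, f i (Prod.map F G p) ∂π ≤ T := by
  have := Measure.isProbabilityMeasure_map (μ := ν) hFm.measurable.aemeasurable
  have := Measure.isProbabilityMeasure_map (μ := μ) hGm.measurable.aemeasurable
  obtain ⟨ρ, hρ, hρT⟩ := exists_isCoupling_forall_integral_le_of_directed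
    (ν := ν.map F) (μ := μ.map G) (T := T) hf fun i u v huv ↦ by
      rw [hFm.integral_map, hGm.integral_map]
      exact hT i ((BoundedContinuousFunction.mkOfCompact u).compContinuous ⟨F, hF⟩)
        ((BoundedContinuousFunction.mkOfCompact v).compContinuous ⟨G, hG⟩)
        fun x y ↦ huv (F x, G y)
  obtain ⟨π, hπ, rfl⟩ := IsCoupling.exists_of_map_measurableEmbedding hFm hGm hρ
  exact ⟨π, hπ, fun i ↦ by simpa [(hFm.prodMap hGm).integral_map] using hρT i⟩

lemma exists_isCoupling_lintegral_le_of_isEmbedding (hF : Topology.IsEmbedding F)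
    (hFm : MeasurableEmbedding F) (hG : Topology.IsEmbedding G) (hGm : MeasurableEmbedding G)
    {c : X × Y → ℝ} (hc : ∀ p, 0 ≤ c p) (hlsc : LowerSemicontinuous c)
    (hT : ∀ (u : X →ᵇ ℝ) (v : Y →ᵇ ℝ), (∀ x y, u x + v y ≤ c (x, y)) →
      ∫ x, u x ∂ν + ∫ y, v y ∂μ ≤ T) :
    ∃ π, IsCoupling π ν μ ∧ ∫⁻ p, ENNReal.ofReal (c p) ∂π ≤ ENNReal.ofReal T := by
  have : Nonempty (X × Y) := nonempty_of_isProbabilityMeasure (ν.prod μ)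
  let := metrizableSpaceMetric K
  let := metrizableSpaceMetric L
  let f (n : ℕ) : C(K × L, ℝ) := ⟨paschHausdorffEnvelope (Prod.map F G) c n,
    (lipschitzWith_paschHausdorffEnvelope hc n).continuous⟩
  have hf : Monotone f := fun m n hmn ↦ monotone_paschHausdorffEnvelope hc (by exact_mod_cast hmn)
  have hf_le (n : ℕ) (p : X × Y) : f n (Prod.map F G p) ≤ c p :=
    paschHausdorffEnvelope_apply_le hc n p
  obtain ⟨π, hπ, hπT⟩ := exists_isCoupling_forall_integral_comp_le hF.continuous hFm hG.continuous
    hGm hf.directed_le fun n u v huv ↦ hT u v fun x y ↦ (huv x y).trans (hf_le n (x, y))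
  have := hπ.isFiniteMeasure
  have hf_meas (n : ℕ) : Measurable fun p ↦ f n (Prod.map F G p) :=
    (f n).continuous.measurable.comp (hFm.prodMap hGm).measurable
  have hf_int (n : ℕ) : Integrable (fun p ↦ f n (Prod.map F G p)) π :=
    (integrable_continuousMap _ (f n)).comp_measurable (hFm.prodMap hGm).measurable
  refine ⟨π, hπ, ?_⟩
  calc ∫⁻ p, ENNReal.ofReal (c p) ∂π
      ≤ ∫⁻ p, ⨆ n, ENNReal.ofReal (f n (Prod.map F G p)) ∂π := lintegral_mono fun p ↦
        ofReal_le_iSup_ofReal_paschHausdorffEnvelope hc (hF.prodMap hG).isInducing (hlsc p)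
    _ = ⨆ n, ∫⁻ p, ENNReal.ofReal (f n (Prod.map F G p)) ∂π :=
        lintegral_iSup (fun n ↦ (hf_meas n).ennreal_ofReal)
          fun m n hmn p ↦ ENNReal.ofReal_le_ofReal (hf hmn _)
    _ ≤ ENNReal.ofReal T := iSup_le fun n ↦ by
        rw [← ofReal_integral_eq_lintegral_ofReal (hf_int n)
          (.of_forall fun p ↦ paschHausdorffEnvelope_nonneg hc n _)]
        exact ENNReal.ofReal_le_ofReal (hπT n)

end Embedding

variable [MetrizableSpace X] [SecondCountableTopology X] [BorelSpace X] [StandardBorelSpace X]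
  [MetrizableSpace Y] [SecondCountableTopology Y] [BorelSpace Y] [StandardBorelSpace Y]

lemma exists_isEmbedding_measurableEmbedding_hilbertCube (X : Type*) [TopologicalSpace X]
    [MetrizableSpace X] [SecondCountableTopology X] [MeasurableSpace X] [BorelSpace X]
    [StandardBorelSpace X] :
    ∃ F : X → ℕ → unitInterval, Topology.IsEmbedding F ∧ MeasurableEmbedding F := by
  let := metrizableSpaceMetric X
  obtain ⟨F, hF⟩ := Metric.PiNatEmbed.exists_embedding_to_hilbert_cube (X := X)
  exact ⟨F, hF, hF.continuous.measurable.measurableEmbedding hF.injective⟩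

theorem exists_isCoupling_lintegral_le_of_forall_dual_le {c : X × Y → ℝ} (hc : ∀ p, 0 ≤ c p)
    (hlsc : LowerSemicontinuous c)
    (hT : ∀ (u : X →ᵇ ℝ) (v : Y →ᵇ ℝ), (∀ x y, u x + v y ≤ c (x, y)) →
      ∫ x, u x ∂ν + ∫ y, v y ∂μ ≤ T) :
    ∃ π, IsCoupling π ν μ ∧ ∫⁻ p, ENNReal.ofReal (c p) ∂π ≤ ENNReal.ofReal T := by
  obtain ⟨F, hF, hFm⟩ := exists_isEmbedding_measurableEmbedding_hilbertCube X
  obtain ⟨G, hG, hGm⟩ := exists_isEmbedding_measurableEmbedding_hilbertCube Y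
  exact exists_isCoupling_lintegral_le_of_isEmbedding hF hFm hG hGm hc hlsc hT

lemma optCost_le_of_forall_dual_le {c : X → X → ℝ} {ν μ : Measure X} [IsProbabilityMeasure ν]
    [IsProbabilityMeasure μ] (hc : ∀ x y, 0 ≤ c x y)
    (hlsc : LowerSemicontinuous fun p : X × X ↦ c p.1 p.2)
    (hT : ∀ u v : X →ᵇ ℝ, (∀ x y, u x + v y ≤ c x y) → ∫ x, u x ∂ν + ∫ y, v y ∂μ ≤ T) :
    optCost c ν μ ≤ ENNReal.ofReal T := by
  obtain ⟨π, hπ, hπT⟩ :=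
    exists_isCoupling_lintegral_le_of_forall_dual_le (fun p : X × X ↦ hc p.1 p.2) hlsc hT
  exact iInf₂_le_of_le π ⟨hπ.map_fst, hπ.map_snd⟩ hπT

end KantorovichDuality

lemma exists_pos_subgradient {α : ℝ → ℝ} (hα : ConvexOn ℝ (Ici 0) α) {t : ℝ} (ht : 0 < t)
    (hlt : α 0 < α t) : ∃ s, 0 < s ∧ ∀ r, 0 ≤ r → α t + s * (r - t) ≤ α r := by
  obtain ⟨s, hs⟩ := exists_subgradient_of_mem_interior hα (x := t) (by simpa using ht)
  have h0 := hs 0 self_mem_Ici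
  exact ⟨s, pos_of_mul_pos_left (by linarith : 0 < s * t) ht.le, hs⟩

lemma ofReal_le_extRealFun (α : ℝ → ℝ) {t : ℝ} {x : ℝ≥0∞} (ht : 0 ≤ t)
    (htx : ENNReal.ofReal t ≤ x) : ENNReal.ofReal (α t) ≤ extRealFun α x :=
  le_iSup₂_of_le t ⟨ht, htx⟩ le_rfl

lemma integrable_exp_mul_boundedContinuousFunction {X : Type*} [TopologicalSpace X]
    [MeasurableSpace X] [OpensMeasurableSpace X] {μ : Measure X} [IsFiniteMeasure μ] (s : ℝ)
    (u : X →ᵇ ℝ) : Integrable (fun x ↦ Real.exp (s * u x)) μ :=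
  ProbabilityTheory.integrable_exp_mul_of_mem_Icc u.continuous.measurable.aemeasurable
    (.of_forall fun x ↦ abs_le.1 (u.norm_coe_le_norm x))

section TransportEntropy

variable {X : Type*} [MeasurableSpace X] {μ ν : Measure X} [IsProbabilityMeasure μ]
  {c : X → X → ℝ} {α : ℝ → ℝ} {s t : ℝ}

section Functions

variable {u v : X → ℝ}

lemma exists_log_integral_exp_le_of_extRealFun_le (hs : 0 ≤ s)
    (hexp : Integrable (fun x ↦ Real.exp (s * u x)) μ)
    (hu : Integrable u (μ.tilted fun x ↦ s * u x)) (hv : Integrable v μ)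
    (huv : ∀ x y, u x + v y ≤ c x y)
    (hα : extRealFun α (optCost c (μ.tilted fun x ↦ s * u x) μ) ≤
      relEntropy (μ.tilted fun x ↦ s * u x) μ) :
    ∃ r, 0 ≤ r ∧
      Real.log (∫ x, Real.exp (s * u x) ∂μ) ≤ -(s * ∫ y, v y ∂μ) + (s * r - α r) := by
  set ν := μ.tilted fun x ↦ s * u x
  set a := ∫ x, u x ∂ν + ∫ y, v y ∂μ
  have hsu : Integrable (fun x ↦ s * u x) ν := hu.const_mul s
  have hweak : ENNReal.ofReal (max a 0) ≤ optCost c ν μ := by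
    simpa [ENNReal.ofReal_max] using ofReal_integral_add_integral_le_optCost hu hv huv
  have hent : α (max a 0) ≤ s * ∫ x, u x ∂ν - Real.log (∫ x, Real.exp (s * u x) ∂μ) := by
    have : IsProbabilityMeasure ν := isProbabilityMeasure_tilted hexp
    have hle := (ofReal_le_extRealFun α (le_max_right a 0) hweak).trans hα
    rw [relEntropy_eq_klDiv] at hle
    rw [← integral_const_mul, ← toReal_klDiv_tilted_self hexp hsu]
    exact (ENNReal.ofReal_le_iff_le_toReal (klDiv_tilted_self_ne_top hexp hsu)).1 hle
  have hsa : s * (∫ x, u x ∂ν + ∫ y, v y ∂μ) ≤ s * max a 0 :=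
    mul_le_mul_of_nonneg_left (le_max_left a 0) hs
  exact ⟨max a 0, le_max_right a 0, by linarith⟩

lemma integral_add_integral_le_of_integral_exp_le [IsProbabilityMeasure ν]
    (hfin : klDiv ν μ ≠ ∞) (hs : 0 < s) (hexp : Integrable (fun x ↦ Real.exp (s * u x)) μ)
    (hu : Integrable u ν) {b : ℝ}
    (hb : ∫ x, Real.exp (s * u x) ∂μ ≤ Real.exp (-(s * ∫ y, v y ∂μ) + b)) :
    ∫ x, u x ∂ν + ∫ y, v y ∂μ ≤ ((klDiv ν μ).toReal + b) / s := by
  have hlog := (Real.log_le_iff_le_exp (integral_exp_pos hexp)).2 hb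
  have hgibbs := integral_le_toReal_klDiv_add_log_integral_exp hfin (hu.const_mul s) hexp
  rw [integral_const_mul] at hgibbs
  rw [le_div_iff₀ hs]
  linarith

end Functions

variable [TopologicalSpace X] [MetrizableSpace X] [SecondCountableTopology X] [BorelSpace X]
  [StandardBorelSpace X]

lemma le_toReal_klDiv_of_forall_integral_exp_le [IsProbabilityMeasure ν]
    (hc : ∀ x y, 0 ≤ c x y) (hlsc : LowerSemicontinuous fun p : X × X ↦ c p.1 p.2)
    (ht : 0 < t) (htc : ENNReal.ofReal t ≤ optCost c ν μ) (hfin : klDiv ν μ ≠ ∞) (hs : 0 < s)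
    {a : ℝ} (hexp : ∀ u v : X →ᵇ ℝ, (∀ x y, u x + v y ≤ c x y) →
      ∫ x, Real.exp (s * u x) ∂μ ≤ Real.exp (-(s * ∫ y, v y ∂μ) + (s * t - a))) :
    a ≤ (klDiv ν μ).toReal := by
  have hcost := htc.trans <| optCost_le_of_forall_dual_le hc hlsc fun u v huv ↦
    integral_add_integral_le_of_integral_exp_le hfin hs
      (integrable_exp_mul_boundedContinuousFunction s u) (u.integrable ν) (hexp u v huv)
  rw [ENNReal.ofReal_le_ofReal_iff', or_iff_left ht.not_ge, le_div_iff₀ hs] at hcost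
  linarith

end TransportEntropy

theorem bobkov_goetze_dual_general
    {X : Type*} [TopologicalSpace X] [MetrizableSpace X] [SecondCountableTopology X]
    [MeasurableSpace X] [BorelSpace X] [StandardBorelSpace X]
    (c : X → X → ℝ) (hc_nonneg : ∀ x y, 0 ≤ c x y)
    (hc_lsc : LowerSemicontinuous fun p : X × X ↦ c p.1 p.2)
    (α : ℝ → ℝ) (hα_cvx : ConvexOn ℝ (Ici 0) α) (hα_zero : α 0 ≤ 0)
    (μ : Measure X) [IsProbabilityMeasure μ] :
    (∀ ν : Measure X, IsProbabilityMeasure ν →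
        extRealFun α (optCost c ν μ) ≤ relEntropy ν μ) ↔
      (∀ u v : X →ᵇ ℝ, (∀ x y, u x + v y ≤ c x y) →
        ∀ s : ℝ, 0 ≤ s →
          ENNReal.ofReal (∫ x, Real.exp (s * u x) ∂μ) ≤
            ⨆ (r : ℝ) (_ : 0 ≤ r),
              ENNReal.ofReal (Real.exp (-(s * ∫ y, v y ∂μ) + (s * r - α r)))) := by
  refine ⟨fun htransport u v huv s hs ↦ ?_, fun hdual ν _ ↦ iSup₂_le fun t ht ↦ ?_⟩
  · have hexp := integrable_exp_mul_boundedContinuousFunction (μ := μ) s u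
    have := isProbabilityMeasure_tilted hexp
    obtain ⟨r, hr, hle⟩ := exists_log_integral_exp_le_of_extRealFun_le hs hexp (u.integrable _)
      (v.integrable μ) huv (htransport _ this)
    exact le_iSup₂_of_le r hr
      (ENNReal.ofReal_le_ofReal ((Real.log_le_iff_le_exp (integral_exp_pos hexp)).1 hle))
  · rcases le_or_gt (α t) 0 with hαt | hαt
    · simp [ENNReal.ofReal_of_nonpos hαt]
    have ht_pos : 0 < t := ht.1.lt_of_ne <| by rintro rfl; exact hαt.not_ge hα_zero
    rw [relEntropy_eq_klDiv]
    obtain htop | hfin := eq_or_ne (klDiv ν μ) ∞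
    · simp [htop]
    obtain ⟨s, hs, htangent⟩ := exists_pos_subgradient hα_cvx ht_pos (hα_zero.trans_lt hαt)
    refine ENNReal.ofReal_le_of_le_toReal
      (le_toReal_klDiv_of_forall_integral_exp_le hc_nonneg hc_lsc ht_pos ht.2 hfin hs
        fun u v huv ↦ ?_)
    rw [← ENNReal.ofReal_le_ofReal_iff (Real.exp_nonneg _)]
    refine (hdual u v huv s hs.le).trans (iSup₂_le fun r hr ↦ ?_)
    exact ENNReal.ofReal_le_ofReal (Real.exp_le_exp.2 (by linarith [htangent r hr]))

/-- Bobkov–Götze dual characterization: for `α` convex increasing with `α(0) = 0`,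
`μ` satisfies `α(𝒯_c(·,μ)) ≤ H(·|μ)` if and only if for all bounded continuous `u, v`
with `u(x) + v(y) ≤ c(x,y)` and all `s ≥ 0`,
`∫ e^{su} dμ ≤ exp(−s ∫ v dμ + α⊛(s))`, where `α⊛(s) = sup_{r ≥ 0} (sr − α(r))`.
(The right-hand side is encoded as `sup_{r ≥ 0} exp(−s ∫ v dμ + sr − α(r))`, which
equals `exp(−s ∫ v dμ + α⊛(s))`, also when `α⊛(s) = ∞`.) -/
theorem bobkov_goetze_dual
    {X : Type*} [TopologicalSpace X] [PolishSpace X] [MeasurableSpace X] [BorelSpace X]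
    (c : X → X → ℝ) (hc_nonneg : ∀ x y, 0 ≤ c x y)
    (hc_lsc : LowerSemicontinuous fun p : X × X => c p.1 p.2)
    (α : ℝ → ℝ)
    (hα_cvx : ConvexOn ℝ (Set.Ici 0) α) (hα_mono : MonotoneOn α (Set.Ici 0))
    (hα_zero : α 0 = 0)
    (μ : Measure X) [IsProbabilityMeasure μ] :
    (∀ ν : Measure X, IsProbabilityMeasure ν →
        extRealFun α (optCost c ν μ) ≤ relEntropy ν μ) ↔
      (∀ u v : BoundedContinuousFunction X ℝ, (∀ x y, u x + v y ≤ c x y) →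
        ∀ s : ℝ, 0 ≤ s →
          ENNReal.ofReal (∫ x, Real.exp (s * u x) ∂μ) ≤
            ⨆ (r : ℝ) (_ : 0 ≤ r),
              ENNReal.ofReal (Real.exp (-(s * ∫ y, v y ∂μ) + (s * r - α r)))) :=
  bobkov_goetze_dual_general c hc_nonneg hc_lsc α hα_cvx hα_zero.le μ
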